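/- There exists a simultaneous transition instance (with overlap-free labelings L₁ and L₂) containing a moving label with a diagonal movement that overlaps 12 other moving labels during the transition; hence the bound of 12 overlapping moving labels per diagonally moving label, and consequently the bound of 6n total overlaps, is tight. -/

import Mathlib

open Set

/-- The closed axis-aligned unit square with lower-left corner `a`. -/
def unitSq (a : ℝ × ℝ) : Set (ℝ × ℝ) :=
  Set.Icc a.1 (a.1 + 1) ×ˢ Set.Icc a.2 (a.2 + 1)

/-- Two unit squares, given by their lower-left corners, overlap if their interiors intersect. -/
def Overlap (a b : ℝ × ℝ) : Prop :=
  (interior (unitSq a) ∩ interior (unitSq b)).Nonempty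

/-- `a` is the lower-left corner of one of the four candidate positions of point `p`
(the four closed unit squares having `p` as a corner). -/
def IsCandidate (p a : ℝ × ℝ) : Prop :=
  a = p ∨ a = (p.1 - 1, p.2) ∨ a = (p.1, p.2 - 1) ∨ a = (p.1 - 1, p.2 - 1)

/-- Two unit squares (given by lower-left corners) share an edge. -/
def SharesEdge (a b : ℝ × ℝ) : Prop :=
  (a.1 = b.1 ∧ (a.2 - b.2 = 1 ∨ b.2 - a.2 = 1)) ∨
  (a.2 = b.2 ∧ (a.1 - b.1 = 1 ∨ b.1 - a.1 = 1))

/-- A movement of the unit-square label of point `p` from candidate position `S` to candidate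
position `E`.  If `S` and `E` share an edge (a non-diagonal movement) we set `I = E` and the
label translates directly from `S` to `E`; if `S` and `E` are diagonally opposite (a diagonal
movement) the label translates through the specified intermediate candidate position `I`,
which shares an edge with both `S` and `E`. -/
structure Movement where
  p : ℝ × ℝ
  S : ℝ × ℝ
  I : ℝ × ℝ
  E : ℝ × ℝ
  candS : IsCandidate p S
  candI : IsCandidate p I
  candE : IsCandidate p E
  legs : (I = E ∧ SharesEdge S E) ∨
    (SharesEdge S I ∧ SharesEdge I E ∧ S.1 ≠ E.1 ∧ S.2 ≠ E.2)

/-- A movement is diagonal if the start and end positions are diagonally opposite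
(equivalently, the intermediate position differs from the end position). -/
def Movement.Diagonal (m : Movement) : Prop := m.I ≠ m.E

/-- Position (lower-left corner) of a moving label at time `t` after the start of its movement:
unit-speed axis-aligned translation, one unit of time per axis-aligned leg; the label rests at
its start position before the movement begins and at its end position after it is finished. -/
noncomputable def Movement.pos (m : Movement) (t : ℝ) : ℝ × ℝ :=
  if t ≤ 0 then m.S
  else if t ≤ 1 then m.S + t • (m.I - m.S)
  else if t ≤ 2 then m.I + (t - 1) • (m.E - m.I)
  else m.E

/-- Duration of a movement: one unit of time per axis-aligned translation. -/
noncomputable def Movement.dur (m : Movement) : ℝ := if m.I = m.E then 1 else 2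

/-- A transition instance: finitely many stationary labels (given by their lower-left corners)
and `n` moving labels, each with a prescribed movement, such that the labeling `L₁` formed by
the stationary labels together with the start positions of the moving labels is overlap-free,
and the labeling `L₂` formed by the stationary labels together with the end positions of the
moving labels is overlap-free. -/
structure TransitionInstance (k n : ℕ) where
  stat : Fin k → ℝ × ℝ
  mov : Fin n → Movement
  free_start : ∀ a b : Fin k ⊕ Fin n, a ≠ b →
    ¬ Overlap (Sum.elim stat (fun j => (mov j).S) a)
      (Sum.elim stat (fun j => (mov j).S) b)
  free_end : ∀ a b : Fin k ⊕ Fin n, a ≠ b →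
    ¬ Overlap (Sum.elim stat (fun j => (mov j).E) a)
      (Sum.elim stat (fun j => (mov j).E) b)

/-- A schedule `τ` of starting times is consecutive if the execution intervals of the movements
are pairwise non-overlapping, i.e. the movements are executed one after another in some order. -/
def Consecutive {k n : ℕ} (T : TransitionInstance k n) (τ : Fin n → ℝ) : Prop :=
  ∀ i j : Fin n, i ≠ j →
    τ i + (T.mov i).dur ≤ τ j ∨ τ j + (T.mov j).dur ≤ τ i

/-- Position (lower-left corner) of each label at global time `t`, when moving label `j`
starts its movement at time `τ j`; stationary labels never move. -/
noncomputable def traj {k n : ℕ} (T : TransitionInstance k n) (τ : Fin n → ℝ) (t : ℝ) :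
    Fin k ⊕ Fin n → ℝ × ℝ :=
  Sum.elim T.stat (fun j => (T.mov j).pos (t - τ j))

/-- The number of overlaps during the transition: the number of unordered pairs of distinct
labels whose interiors intersect at some moment. -/
noncomputable def overlapCount {k n : ℕ} (T : TransitionInstance k n) (τ : Fin n → ℝ) : ℕ :=
  Set.ncard {q : Sym2 (Fin k ⊕ Fin n) | ∃ a b : Fin k ⊕ Fin n,
    q = s(a, b) ∧ a ≠ b ∧ ∃ t : ℝ, Overlap (traj T τ t a) (traj T τ t b)}

/-!
The central label turns from rightward to upward motion at time `1`, with its lower-left corner at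
the origin.  Eight of the other labels turn on top of it at that very moment; two more cross it
shortly before, and two shortly after.  All coordinates are multiples of `1/10`, so both
overlap-freeness and the crossings become inequalities between integers.

The configuration is invariant under the reflection `(x, y) ↦ (-y, -x)` of lower-left corners
combined with the time reversal `t ↦ 2 - t`, which exchanges the start and end labelings.
-/

theorem overlap_iff_abs_sub_lt_one {a b : ℝ × ℝ} :
    Overlap a b ↔ |a.1 - b.1| < 1 ∧ |a.2 - b.2| < 1 := by
  have nonempty_iff_abs (x y : ℝ) :
      (Ioo x (x + 1) ∩ Ioo y (y + 1)).Nonempty ↔ |x - y| < 1 := by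
    rw [Ioo_inter_Ioo, nonempty_Ioo, abs_lt]
    grind
  simp only [Overlap, unitSq, interior_prod_eq, interior_Icc, prod_inter_prod, prod_nonempty_iff,
    nonempty_iff_abs]

theorem Movement.diagonal_iff (m : Movement) :
    m.Diagonal ↔ m.S.1 ≠ m.E.1 ∧ m.S.2 ≠ m.E.2 := by
  refine ⟨fun h => ?_, fun h hIE => ?_⟩
  · rcases m.legs with ⟨hIE, -⟩ | ⟨-, -, hne⟩
    · exact absurd hIE h
    · exact hne
  · have hSE : SharesEdge m.S m.E := by
      rcases m.legs with ⟨-, hSE⟩ | ⟨hSI, -⟩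
      · exact hSE
      · exact hIE ▸ hSI
    rcases hSE with ⟨heq, -⟩ | ⟨heq, -⟩
    · exact h.1 heq
    · exact h.2 heq

theorem Movement.pos_one_add (m : Movement) {s : ℝ} (hs : |s| ≤ 1) :
    m.pos (1 + s) = m.I + min s 0 • (m.I - m.S) + max s 0 • (m.E - m.I) := by
  obtain ⟨hs₁, hs₂⟩ := abs_le.mp hs
  unfold Movement.pos
  rcases hs₁.eq_or_lt with rfl | hs₁
  · norm_num
  rcases le_or_gt s 0 with hs₀ | hs₀
  · rw [if_neg (by linarith), if_pos (by linarith), min_eq_left hs₀, max_eq_right hs₀]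
    module
  · rw [if_neg (by linarith), if_neg (by linarith), if_pos (by linarith), min_eq_right hs₀.le,
      max_eq_left hs₀.le]
    module

/-- The point with coordinates `z` in units of `1 / N`. -/
noncomputable def latticePoint (N : ℤ) (z : ℤ × ℤ) : ℝ × ℝ := (z.1 / N, z.2 / N)

/-- Overlap of two unit squares whose lower-left corners are given in units of `1 / N`. -/
abbrev LatticeOverlap (N : ℤ) (a b : ℤ × ℤ) : Prop := |a.1 - b.1| < N ∧ |a.2 - b.2| < N

/-- The direction of one leg of a movement. -/
inductive Direction
  | left | right | up | down

/-- The unit vector pointing in a given direction. -/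
def Direction.vec : Direction → ℤ × ℤ
  | left => (-1, 0)
  | right => (1, 0)
  | up => (0, 1)
  | down => (0, -1)

/-- A diagonal movement of a label whose turning position is a lattice point, encoded by this
position and the directions of its two legs. The mesh `1 / N` is not part of the data. -/
structure LatticeTurn where
  mid : ℤ × ℤ
  first : Direction
  second : Direction
  perp : first.vec.1 * second.vec.1 + first.vec.2 * second.vec.2 = 0 := by decide

/-- The lattice position reached `k` steps after the turn, or `-k` steps before it. -/
def LatticeTurn.pos (T : LatticeTurn) (k : ℤ) : ℤ × ℤ :=
  T.mid + min k 0 • T.first.vec + max k 0 • T.second.vec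

theorem latticePoint_add (N : ℤ) (a b : ℤ × ℤ) :
    latticePoint N (a + b) = latticePoint N a + latticePoint N b := by
  simp [latticePoint, add_div]

theorem latticePoint_smul (N n : ℤ) (a : ℤ × ℤ) :
    latticePoint N (n • a) = (n : ℝ) • latticePoint N a := by
  simp [latticePoint, mul_div_assoc]

section Mesh

variable {N : ℤ}

theorem overlap_latticePoint_iff (hN : 0 < N) {a b : ℤ × ℤ} :
    Overlap (latticePoint N a) (latticePoint N b) ↔ LatticeOverlap N a b := by
  have hN' : (0 : ℝ) < N := mod_cast hN
  have abs_div_lt_one (x y : ℤ) : |(x : ℝ) / N - y / N| < 1 ↔ |x - y| < N := by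
    rw [← sub_div, abs_div, abs_of_pos hN', div_lt_one hN']
    exact_mod_cast Iff.rfl
  simp only [overlap_iff_abs_sub_lt_one, latticePoint, abs_div_lt_one]

theorem isCandidate_latticePoint (hN : N ≠ 0) {p a : ℤ × ℤ}
    (h₁ : a.1 = p.1 ∨ a.1 = p.1 - N) (h₂ : a.2 = p.2 ∨ a.2 = p.2 - N) :
    IsCandidate (latticePoint N p) (latticePoint N a) := by
  have hN' : (N : ℝ) ≠ 0 := mod_cast hN
  rcases h₁ with h₁ | h₁ <;> rcases h₂ with h₂ | h₂ <;>
    simp [IsCandidate, latticePoint, h₁, h₂, sub_div, hN']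

theorem sharesEdge_latticePoint_add_vec (hN : N ≠ 0) (a : ℤ × ℤ) (d : Direction) :
    SharesEdge (latticePoint N a) (latticePoint N (a + N • d.vec)) := by
  have hN' : (N : ℝ) ≠ 0 := mod_cast hN
  cases d <;> simp [SharesEdge, latticePoint, Direction.vec, add_div, hN']

end Mesh

namespace LatticeTurn

variable {N : ℤ} (T : LatticeTurn)

theorem pos_zero : T.pos 0 = T.mid := by
  simp [pos]

theorem pos_of_nonneg {k : ℤ} (hk : 0 ≤ k) : T.pos k = T.mid + k • T.second.vec := by
  simp [pos, hk]

theorem pos_neg_add {k : ℤ} (hk : 0 ≤ k) : T.pos (-k) + k • T.first.vec = T.mid := by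
  simp [pos, hk]

theorem latticePoint_mid_sub_pos_neg (hN : 0 ≤ N) :
    latticePoint N T.mid - latticePoint N (T.pos (-N)) = (N : ℝ) • latticePoint N T.first.vec := by
  rw [sub_eq_iff_eq_add', ← latticePoint_smul, ← latticePoint_add, T.pos_neg_add hN]

theorem latticePoint_pos_sub_mid (hN : 0 ≤ N) :
    latticePoint N (T.pos N) - latticePoint N T.mid = (N : ℝ) • latticePoint N T.second.vec := by
  rw [sub_eq_iff_eq_add', ← latticePoint_smul, ← latticePoint_add, T.pos_of_nonneg hN]

/-- The point labeled by `T`: the upper right of its four candidate corners. -/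
def anchor (N : ℤ) : ℤ × ℤ := T.pos (-N) ⊔ T.pos N

theorem isCandidate_anchor (hN : 0 < N) {k : ℤ} (hk : k = -N ∨ k = 0 ∨ k = N) :
    IsCandidate (latticePoint N (T.anchor N)) (latticePoint N (T.pos k)) := by
  obtain ⟨mid, first, second, perp⟩ := T
  apply isCandidate_latticePoint hN.ne' <;> cases first <;> cases second <;>
    simp only [Direction.vec, anchor, pos, Prod.fst_sup, Prod.snd_sup, Prod.fst_add, Prod.snd_add,
      Prod.smul_fst, Prod.smul_snd, smul_eq_mul] at perp ⊢ <;>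
    omega

theorem pos_neg_ne_pos (hN : 0 < N) :
    (T.pos (-N)).1 ≠ (T.pos N).1 ∧ (T.pos (-N)).2 ≠ (T.pos N).2 := by
  obtain ⟨mid, first, second, perp⟩ := T
  cases first <;> cases second <;>
    simp only [Direction.vec, pos, Prod.fst_add, Prod.snd_add, Prod.smul_fst,
      Prod.smul_snd, smul_eq_mul] at perp ⊢ <;>
    omega

/-- The movement with turning position `T.mid` on the lattice of mesh `1 / N`; one unit of time is
`N` lattice steps. -/
noncomputable def toMovement (hN : 0 < N) : Movement where
  p := latticePoint N (T.anchor N)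
  S := latticePoint N (T.pos (-N))
  I := latticePoint N T.mid
  E := latticePoint N (T.pos N)
  candS := T.isCandidate_anchor hN (.inl rfl)
  candI := T.pos_zero ▸ T.isCandidate_anchor hN (.inr (.inl rfl))
  candE := T.isCandidate_anchor hN (.inr (.inr rfl))
  legs := by
    refine .inr ⟨?_, ?_, ?_, ?_⟩
    · rw [← T.pos_neg_add hN.le]
      exact sharesEdge_latticePoint_add_vec hN.ne' _ _
    · rw [T.pos_of_nonneg hN.le]
      exact sharesEdge_latticePoint_add_vec hN.ne' _ _
    · simpa [latticePoint, hN.ne'] using (T.pos_neg_ne_pos hN).1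
    · simpa [latticePoint, hN.ne'] using (T.pos_neg_ne_pos hN).2

theorem toMovement_diagonal (hN : 0 < N) : (T.toMovement hN).Diagonal := by
  rw [Movement.diagonal_iff]
  simpa [toMovement, latticePoint, hN.ne'] using T.pos_neg_ne_pos hN

theorem pos_toMovement (hN : 0 < N) {k : ℤ} (hk : |k| ≤ N) :
    (T.toMovement hN).pos (1 + k / N) = latticePoint N (T.pos k) := by
  have hN' : (0 : ℝ) < N := mod_cast hN
  have hk' : |(k / N : ℝ)| ≤ 1 := by
    rw [abs_div, abs_of_pos hN', div_le_one hN']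
    exact_mod_cast hk
  have min_mul : min (k / N : ℝ) 0 * N = (min k 0 : ℤ) := by
    rw [min_mul_of_nonneg _ _ hN'.le, div_mul_cancel₀ _ hN'.ne', zero_mul, Int.cast_min,
      Int.cast_zero]
  have max_mul : max (k / N : ℝ) 0 * N = (max k 0 : ℤ) := by
    rw [max_mul_of_nonneg _ _ hN'.le, div_mul_cancel₀ _ hN'.ne', zero_mul, Int.cast_max,
      Int.cast_zero]
  calc (T.toMovement hN).pos (1 + k / N)
      = latticePoint N T.mid +
          min (k / N : ℝ) 0 • (latticePoint N T.mid - latticePoint N (T.pos (-N))) +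
          max (k / N : ℝ) 0 • (latticePoint N (T.pos N) - latticePoint N T.mid) :=
        Movement.pos_one_add _ hk'
    _ = latticePoint N T.mid + ((min k 0 : ℤ) : ℝ) • latticePoint N T.first.vec +
          ((max k 0 : ℤ) : ℝ) • latticePoint N T.second.vec := by
        rw [T.latticePoint_mid_sub_pos_neg hN.le, T.latticePoint_pos_sub_mid hN.le, smul_smul,
          smul_smul, min_mul, max_mul]
    _ = latticePoint N (T.pos k) := by
        rw [← latticePoint_smul, ← latticePoint_smul, ← latticePoint_add, ← latticePoint_add, pos]

theorem overlap_toMovement_of_latticeOverlap {T U : LatticeTurn} (hN : 0 < N) {k : ℤ}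
    (hk : |k| ≤ N) (h : LatticeOverlap N (T.pos k) (U.pos k)) :
    Overlap ((T.toMovement hN).pos (1 + k / N)) ((U.toMovement hN).pos (1 + k / N)) := by
  rwa [T.pos_toMovement hN hk, U.pos_toMovement hN hk, overlap_latticePoint_iff hN]

/-- The transition instance without stationary labels whose moving labels perform the movements
`T i`. -/
noncomputable def toTransitionInstance {n : ℕ} (hN : 0 < N) (T : Fin n → LatticeTurn)
    (start_free : ∀ i j, i ≠ j → ¬ LatticeOverlap N ((T i).pos (-N)) ((T j).pos (-N)))
    (end_free : ∀ i j, i ≠ j → ¬ LatticeOverlap N ((T i).pos N) ((T j).pos N)) :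
    TransitionInstance 0 n where
  stat := Fin.elim0
  mov i := (T i).toMovement hN
  free_start := by
    rintro (i | i) (j | j) hij
    iterate 3 exact Fin.elim0 ‹Fin 0›
    exact (overlap_latticePoint_iff hN).not.mpr (start_free i j (mt (congrArg Sum.inr) hij))
  free_end := by
    rintro (i | i) (j | j) hij
    iterate 3 exact Fin.elim0 ‹Fin 0›
    exact (overlap_latticePoint_iff hN).not.mpr (end_free i j (mt (congrArg Sum.inr) hij))

end LatticeTurn

open Direction in
/-- The thirteen movements of the extremal configuration, the central one first, on the lattice
of mesh `1 / 10`. -/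
def tightTurns : Fin 13 → LatticeTurn :=
  ![.mk (0, 0) right up,
    .mk (8, -8) down left, .mk (8, -8) up right, .mk (8, -8) left down, .mk (-2, 2) down left,
    .mk (-2, -8) up left, .mk (8, 2) down right, .mk (-2, -8) left down, .mk (8, 2) left down,
    .mk (-12, -6) up left, .mk (6, 12) down right, .mk (-14, 4) down left, .mk (-4, 14) down left]

/-- Lattice times, relative to the common turning time, at which the labels of `tightTurns` overlap
the central one. -/
def tightTimes : Fin 13 → ℤ := ![0, 0, 0, 0, 0, 0, 0, 0, 0, -3, 3, -5, 5]

theorem tightTurns_start_free :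
    ∀ i j, i ≠ j → ¬ LatticeOverlap 10 ((tightTurns i).pos (-10)) ((tightTurns j).pos (-10)) := by
  decide

theorem tightTurns_end_free :
    ∀ i j, i ≠ j → ¬ LatticeOverlap 10 ((tightTurns i).pos 10) ((tightTurns j).pos 10) := by
  decide

theorem abs_tightTimes_le (i : Fin 13) : |tightTimes i| ≤ 10 := by
  decide +revert

theorem latticeOverlap_tightTurns_zero (i : Fin 13) :
    LatticeOverlap 10 ((tightTurns i).pos (tightTimes i)) ((tightTurns 0).pos (tightTimes i)) := by
  decide +revert

/-- There exists a simultaneous transition instance containing a moving label with a diagonal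
movement that overlaps `12` other moving labels during the transition; hence the bound of `12`
overlapping moving labels per diagonally moving label is tight. -/
theorem simultaneous_diagonal_degree_tight :
    ∃ (k n : ℕ) (T : TransitionInstance k n) (j : Fin n),
      (T.mov j).Diagonal ∧
      {a : Fin n | a ≠ j ∧
        ∃ t : ℝ, Overlap ((T.mov a).pos t) ((T.mov j).pos t)}.ncard = 12 := by
  have mesh_pos : (0 : ℤ) < 10 := by norm_num
  let T := LatticeTurn.toTransitionInstance mesh_pos tightTurns tightTurns_start_free
    tightTurns_end_free
  have overlap_central (i : Fin 13) : ∃ t : ℝ, Overlap ((T.mov i).pos t) ((T.mov 0).pos t) :=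
    ⟨_, LatticeTurn.overlap_toMovement_of_latticeOverlap mesh_pos (abs_tightTimes_le i)
      (latticeOverlap_tightTurns_zero i)⟩
  refine ⟨0, 13, T, 0, (tightTurns 0).toMovement_diagonal mesh_pos, ?_⟩
  simp only [overlap_central, and_true]
  rw [← compl_singleton_eq, ncard_compl]
  simp
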